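/- arXiv:1801.07458 — 2 statements merged into one kernel-verified Lean document; each statement's English description precedes it below -/
import Mathlib

section
/- Let u be a pattern (nonempty word) that is not blocking, and let α(u) be the number of distinct letters occurring in u. Then u is (2·α(u)+4)-avoidable; that is, there are infinitely many words over an alphabet with 2·α(u)+4 letters that avoid u. In particular m(u) ≤ 2·α(u)+4, where m(u) is the least n such that u is n-avoidable. -/
/-- A word `w` *encounters* the pattern `u` if some letterwise substitution `h`
(sending each letter of `u` to a nonempty word) maps `u` onto a factor
(contiguous subword) of `w`. -/
def Encounters {Y B : Type*} (u : List Y) (w : List B) : Prop :=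
  ∃ h : Y → List B, (∀ y ∈ u, h y ≠ []) ∧ u.flatMap h <:+: w

/-- A word `w` *avoids* the pattern `u` if it does not encounter it. -/
def Avoids {Y B : Type*} (u : List Y) (w : List B) : Prop := ¬ Encounters u w

/-- A pattern `u` is `n`-avoidable if infinitely many words over an
`n`-letter alphabet avoid `u`. -/
def NAvoidable {Y : Type*} (u : List Y) (n : ℕ) : Prop :=
  {w : List (Fin n) | Avoids u w}.Infinite

/-- A pattern `u` is *blocking* (unavoidable) if over every finite alphabet
only finitely many words avoid `u`. -/
def Blocking {Y : Type*} (u : List Y) : Prop :=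
  ∀ n : ℕ, {w : List (Fin n) | Avoids u w}.Finite

/-- The Zimin words `Z₀ = ε`, `Zₖ₊₁ = Zₖ k Zₖ`. -/
def zimin : ℕ → List ℕ
  | 0 => []
  | k + 1 => zimin k ++ k :: zimin k

/-- The pattern `u` is encountered by some Zimin word. -/
def ZiminEncountered (u : List ℕ) : Prop := ∃ k, Encounters u (zimin k)

theorem Encounters.trans {X Y B : Type*} {u : List X} {v : List Y} {w : List B}
    (huv : Encounters u v) (hvw : Encounters v w) : Encounters u w := by
  obtain ⟨f, hf, hfv⟩ := huv
  obtain ⟨g, hg, hgw⟩ := hvw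
  refine ⟨fun x => (f x).flatMap g, fun x hx => ?_, ?_⟩
  · obtain ⟨y, hy⟩ := List.exists_mem_of_ne_nil _ (hf x hx)
    have hyv : y ∈ v := hfv.subset (List.mem_flatMap.2 ⟨x, hx, hy⟩)
    intro h
    exact hg y hyv (List.flatMap_eq_nil_iff.1 h y hy)
  · rw [← List.flatMap_assoc]
    obtain ⟨a, b, rfl⟩ := hfv
    refine List.IsInfix.trans ⟨a.flatMap g, b.flatMap g, ?_⟩ hgw
    simp

theorem lt_of_mem_zimin {k x : ℕ} (h : x ∈ zimin k) : x < k := by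
  induction k with
  | zero => simp [zimin] at h
  | succ k ih =>
    simp only [zimin, List.mem_append, List.mem_cons] at h
    rcases h with h | rfl | h
    · exact (ih h).trans (Nat.lt_succ_self k)
    · exact Nat.lt_succ_self _
    · exact (ih h).trans (Nat.lt_succ_self k)

theorem le_length_zimin (k : ℕ) : k ≤ (zimin k).length := by
  induction k with
  | zero => simp
  | succ k ih => simp [zimin]; omega

theorem zimin_add (m k : ℕ) :
    zimin (m + k) = zimin m ++ (zimin k).flatMap fun a => (a + m) :: zimin m := by
  induction k with
  | zero => simp [zimin]
  | succ k ih =>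
    rw [← Nat.add_assoc, zimin, ih]
    simp [zimin, Nat.add_comm]

/-- A word that reads the same block at two places with a nonempty gap in between encounters
`Zₖ₊₁` as soon as the block encounters `Zₖ`. -/
theorem encounters_zimin_succ {B : Type*} {k : ℕ} {b m w : List B} (hb : Encounters (zimin k) b)
    (hm : m ≠ []) (hw : b ++ m ++ b <:+: w) : Encounters (zimin (k + 1)) w := by
  obtain ⟨h, hne, s, t, rfl⟩ := hb
  have hcongr : (zimin k).flatMap (fun x => if x = k then t ++ m ++ s else h x) =
      (zimin k).flatMap h := by
    refine List.flatMap_congr fun x hx => ?_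
    rw [if_neg (lt_of_mem_zimin hx).ne]
  refine ⟨fun x => if x = k then t ++ m ++ s else h x, fun x hx => ?_, ?_⟩
  · by_cases hxk : x = k
    · simp [hxk, hm]
    · simp only [if_neg hxk]
      simp only [zimin, List.mem_append, List.mem_cons, hxk, false_or, or_self] at hx
      exact hne x hx
  · refine List.IsInfix.trans ⟨s, t, ?_⟩ hw
    rw [zimin, List.flatMap_append, List.flatMap_cons, hcongr]
    simp

theorem exists_length_encounters_zimin (n k : ℕ) :
    ∃ l, ∀ w : List (Fin n), l ≤ w.length → Encounters (zimin k) w := by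
  induction k with
  | zero => exact ⟨0, fun w _ => ⟨fun _ => [], by simp [zimin], by simp [zimin]⟩⟩
  | succ k ih =>
    obtain ⟨l, hl⟩ := ih
    refine ⟨(l + 1) * (Fintype.card (List.Vector (Fin n) l) + 1), fun w hw => ?_⟩
    have hlen : ∀ i : Fin (Fintype.card (List.Vector (Fin n) l) + 1),
        ((w.drop ((l + 1) * i)).take l).length = l := by
      intro i
      have : (l + 1) * (i + 1 : ℕ) ≤ w.length :=
        (Nat.mul_le_mul_left _ (Nat.succ_le_of_lt i.2)).trans hw
      rw [List.length_take, List.length_drop]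
      rw [Nat.mul_add] at this
      omega
    let F : Fin (Fintype.card (List.Vector (Fin n) l) + 1) → List.Vector (Fin n) l :=
      fun i => ⟨(w.drop ((l + 1) * i)).take l, hlen i⟩
    obtain ⟨i, j, hij, heq⟩ := Fintype.exists_ne_map_eq_of_card_lt F (by simp)
    wlog hlt : i < j generalizing i j
    · exact this j i hij.symm heq.symm (lt_of_le_of_ne (not_lt.1 hlt) hij.symm)
    have heq' : (w.drop ((l + 1) * i)).take l = (w.drop ((l + 1) * j)).take l :=
      congrArg Subtype.val heq
    have hgap : (l + 1) * (i + 1 : ℕ) ≤ (l + 1) * j :=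
      Nat.mul_le_mul_left _ (Nat.succ_le_of_lt hlt)
    rw [Nat.mul_add] at hgap
    have hj : (l + 1) * (j + 1 : ℕ) ≤ w.length :=
      (Nat.mul_le_mul_left _ (Nat.succ_le_of_lt j.2)).trans hw
    rw [Nat.mul_add] at hj
    set a := (l + 1) * (i : ℕ)
    set c := (l + 1) * (j : ℕ)
    refine encounters_zimin_succ (b := (w.drop a).take l)
      (m := (w.drop (a + l)).take (c - (a + l))) (hl _ (hlen i).ge) ?_ ?_
    · rw [← List.length_pos_iff, List.length_take, List.length_drop]
      omega
    · refine ⟨w.take a, w.drop (c + l), ?_⟩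
      conv_lhs => rw [show ∀ x y z : List (Fin n), x ++ y ++ z = x ++ (y ++ z) by simp]
      nth_rewrite 2 [heq']
      have h₁ : (w.drop c).take l ++ w.drop (c + l) = w.drop c := by
        rw [← List.drop_drop, List.take_append_drop]
      have h₂ : (w.drop (a + l)).take (c - (a + l)) ++ w.drop c = w.drop (a + l) := by
        conv_rhs => rw [← List.take_append_drop (c - (a + l)) (w.drop (a + l)), List.drop_drop]
        rw [show a + l + (c - (a + l)) = c by omega]
      have h₃ : (w.drop a).take l ++ w.drop (a + l) = w.drop a := by
        rw [← List.drop_drop, List.take_append_drop]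
      simp only [List.append_assoc]
      rw [h₁, h₂, h₃, List.take_append_drop]

theorem ZiminEncountered.blocking {u : List ℕ} (hu : ZiminEncountered u) : Blocking u := by
  obtain ⟨k, hk⟩ := hu
  intro n
  obtain ⟨l, hl⟩ := exists_length_encounters_zimin n k
  refine (List.finite_length_lt (Fin n) l).subset fun w hw => ?_
  by_contra hlen
  exact hw (hk.trans (hl w (not_lt.1 hlen)))

/-- `OccursAt ℓ p u x i`: when the letters of `u` are laid out from position `p` on, each letter
`y` taking `ℓ y` positions, some occurrence of the letter `x` starts at position `i`. -/
def OccursAt (ℓ : ℕ → ℕ) (p : ℕ) (u : List ℕ) (x i : ℕ) : Prop :=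
  ∃ u₁ u₂, u = u₁ ++ x :: u₂ ∧ i = p + (u₁.map ℓ).sum

theorem occursAt_cons_self (ℓ : ℕ → ℕ) (p : ℕ) (u : List ℕ) (x : ℕ) :
    OccursAt ℓ p (x :: u) x p :=
  ⟨[], u, rfl, by simp⟩

theorem OccursAt.cons {ℓ : ℕ → ℕ} {p : ℕ} {u : List ℕ} {x i : ℕ} (y : ℕ)
    (h : OccursAt ℓ (p + ℓ y) u x i) : OccursAt ℓ p (y :: u) x i := by
  obtain ⟨u₁, u₂, rfl, rfl⟩ := h
  exact ⟨y :: u₁, u₂, rfl, by simp [Nat.add_assoc]⟩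

theorem exists_occursAt {ℓ : ℕ → ℕ} {p : ℕ} {u : List ℕ} {x : ℕ} (h : x ∈ u) :
    ∃ i, OccursAt ℓ p u x i := by
  obtain ⟨u₁, u₂, rfl⟩ := List.append_of_mem h
  exact ⟨_, u₁, u₂, rfl, rfl⟩

theorem OccursAt.mem {ℓ : ℕ → ℕ} {p : ℕ} {u : List ℕ} {x i : ℕ} (h : OccursAt ℓ p u x i) :
    x ∈ u := by
  obtain ⟨u₁, u₂, rfl, -⟩ := h
  simp

theorem take_append_flatMap_append_drop {ℓ L s e : ℕ → ℕ} {A R : ℕ → Prop} [DecidablePred A]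
    [DecidablePred R] (hRA : ∀ x, R x → A x) (X : List ℕ) (τ : ℕ → List ℕ)
    (g M f : ℕ → List ℕ)
    (hM : ∀ x, R x → M x ++ X = (g x).flatMap τ)
    (hfR : ∀ x, R x → f x = X.drop (s x) ++ M x ++ X.take (e x))
    (hf : ∀ x, ¬ R x → f x = (X.drop (s x)).take (e x - s x)) (u : List ℕ) (p : ℕ)
    (hdead : ∀ x i, OccursAt ℓ p u x i → ¬ A x → L i = L (i + ℓ x))
    (hs : ∀ x i, OccursAt ℓ p u x i → A x → L i = s x)
    (he : ∀ x i, OccursAt ℓ p u x i → A x → L (i + ℓ x) = e x)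
    (hle : ∀ x ∈ u, A x → ¬ R x → s x ≤ e x) :
    X.take (L p) ++ (u.filter A).flatMap f ++ X.drop (L (p + (u.map ℓ).sum)) =
      X ++ ((u.filter R).flatMap g).flatMap τ := by
  induction u generalizing p with
  | nil => simp
  | cons x u ih =>
    have ih' := ih (p + ℓ x) (fun y i h => hdead y i (h.cons x)) (fun y i h => hs y i (h.cons x))
      (fun y i h => he y i (h.cons x)) (fun y hy => hle y (List.mem_cons_of_mem x hy))
    have hx := occursAt_cons_self ℓ p u x
    rw [List.map_cons, List.sum_cons, ← Nat.add_assoc]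
    by_cases hA : A x
    · rw [List.filter_cons_of_pos (by simpa using hA), List.flatMap_cons]
      rw [he x p hx hA] at ih'
      rw [hs x p hx hA]
      by_cases hR : R x
      · rw [List.filter_cons_of_pos (by simpa using hR), List.flatMap_cons, List.flatMap_append,
          ← hM x hR, List.append_assoc (M x), ← ih', hfR x hR]
        simp only [← List.append_assoc, List.take_append_drop]
      · rw [List.filter_cons_of_neg (by simpa using hR), ← ih', hf x hR]
        have : X.take (s x) ++ (X.drop (s x)).take (e x - s x) = X.take (e x) := by
          rw [← List.take_add, Nat.add_sub_cancel' (hle x (by simp) hA hR)]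
        simp only [← List.append_assoc, this]
    · have hR : ¬ R x := fun h => hA (hRA x h)
      rw [List.filter_cons_of_neg (by simpa using hA), List.filter_cons_of_neg (by simpa using hR),
        hdead x p hx hA, ih']

theorem suffix_append_flatMap {τ : ℕ → List ℕ} {X : List ℕ} (hτ : ∀ a, X <:+ τ a) (v : List ℕ) :
    X <:+ X ++ v.flatMap τ := by
  rcases List.eq_nil_or_concat v with rfl | ⟨v, a, rfl⟩
  · simp
  · rw [List.concat_eq_append, List.flatMap_append]
    refine (hτ a).trans ⟨X ++ v.flatMap τ, by simp⟩

/-- If the letters outside `R` get strictly increasing labels, consistent along the pattern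
restricted to `A`, then deleting them does not affect being encountered by a Zimin word. -/
theorem ZiminEncountered.of_filter {ℓ L s e : ℕ → ℕ} {A R : ℕ → Prop} [DecidablePred A]
    [DecidablePred R] (hRA : ∀ x, R x → A x) {u : List ℕ} {p : ℕ}
    (hdead : ∀ x i, OccursAt ℓ p u x i → ¬ A x → L i = L (i + ℓ x))
    (hs : ∀ x i, OccursAt ℓ p u x i → A x → L i = s x)
    (he : ∀ x i, OccursAt ℓ p u x i → A x → L (i + ℓ x) = e x)
    (hlt : ∀ x ∈ u, A x → ¬ R x → s x < e x)
    (hR : ZiminEncountered (u.filter R)) : ZiminEncountered (u.filter A) := by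
  classical
  obtain ⟨k, g, hg, hgk⟩ := hR
  obtain ⟨m, hm⟩ : ∃ m, ∀ x ∈ u, s x < m :=
    ⟨u.toFinset.sup s + 1, fun x hx =>
      Nat.lt_succ_of_le (Finset.le_sup (List.mem_toFinset.2 hx))⟩
  obtain ⟨X, hX⟩ : ∃ X, X = zimin m := ⟨_, rfl⟩
  obtain ⟨τ, hτ⟩ : ∃ τ : ℕ → List ℕ, τ = fun a => (a + m) :: X := ⟨_, rfl⟩
  have hex : ∀ v : List ℕ, ∃ M : List ℕ, v ≠ [] → M ++ X = v.flatMap τ ∧ M ≠ [] := by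
    intro v
    rcases List.eq_nil_or_concat v with rfl | ⟨v, a, rfl⟩
    · exact ⟨[], fun h => absurd rfl h⟩
    · exact ⟨v.flatMap τ ++ [a + m], fun _ => by simp [hτ]⟩
  choose N hN using hex
  set g' : ℕ → List ℕ := fun x => if x ∈ u.filter R then g x else [0] with hg'
  have hg'ne : ∀ x, g' x ≠ [] := by
    intro x
    simp only [hg']
    split_ifs with h
    · exact hg x h
    · simp
  have hg'g : (u.filter R).flatMap g' = (u.filter R).flatMap g :=
    List.flatMap_congr fun x hx => by simp only [hg', if_pos hx]
  have key := take_append_flatMap_append_drop hRA X τ g' (fun x => N (g' x))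
    (fun x => if R x then X.drop (s x) ++ N (g' x) ++ X.take (e x) else
      (X.drop (s x)).take (e x - s x)) (fun x _ => (hN _ (hg'ne x)).1)
    (fun x h => if_pos h) (fun x h => if_neg h) u p hdead hs he
    (fun x hx hA hR => (hlt x hx hA hR).le)
  refine ⟨m + k, _, fun x hx => ?_, List.IsInfix.trans ⟨_, _, key⟩ ?_⟩
  · obtain ⟨hxu, hA⟩ := List.mem_filter.1 hx
    by_cases hR : R x
    · simp [if_pos hR, (hN _ (hg'ne x)).2]
    · have h₁ := hlt x hxu (by simpa using hA) hR
      have h₂ : s x < X.length := hX ▸ (hm x hxu).trans_le (le_length_zimin m)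
      rw [if_neg hR, ← List.length_pos_iff, List.length_take, List.length_drop]
      omega
  · rw [zimin_add, hg'g, ← hX, ← hτ]
    obtain ⟨a, b, hab⟩ := hgk
    obtain ⟨c, hc⟩ := suffix_append_flatMap (τ := τ) (X := X) (fun x => ⟨[x + m], by simp [hτ]⟩) a
    refine ⟨c, b.flatMap τ, ?_⟩
    simp only [← hab, List.flatMap_append, ← List.append_assoc, hc]

/-- The letter `x` is *alive* for a set `T` of positions if some occurrence of `x` covers a
position of `T`. -/
def Alive (ℓ : ℕ → ℕ) (p : ℕ) (u : List ℕ) (T : ℕ → Prop) (x : ℕ) : Prop :=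
  ∃ i, OccursAt ℓ p u x i ∧ ∃ t < ℓ x, T (i + t)

theorem Alive.mono {ℓ : ℕ → ℕ} {p : ℕ} {u : List ℕ} {T T' : ℕ → Prop} (hT : ∀ i, T' i → T i)
    {x : ℕ} (h : Alive ℓ p u T' x) : Alive ℓ p u T x := by
  obtain ⟨i, hi, t, ht, h⟩ := h
  exact ⟨i, hi, t, ht, hT _ h⟩

open Classical in
/-- If a labelling `L` of the positions counts the positions of `T` outside `T'` and is consistent
along the occurrences of each alive letter, then shrinking `T` to `T'` is harmless. -/
theorem ZiminEncountered.of_alive {ℓ : ℕ → ℕ} {p : ℕ} {u : List ℕ} {T T' : ℕ → Prop}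
    (hT : ∀ i, T' i → T i) (L : ℕ → ℕ)
    (hL : ∀ i, ¬ T' i → L (i + 1) = L i + if T i then 1 else 0)
    (hLx : ∀ x i j, Alive ℓ p u T x → OccursAt ℓ p u x i → OccursAt ℓ p u x j →
      L i = L j ∧ L (i + ℓ x) = L (j + ℓ x))
    (h : ZiminEncountered (u.filter (Alive ℓ p u T'))) :
    ZiminEncountered (u.filter (Alive ℓ p u T)) := by
  choose! st hst using fun x (hx : x ∈ u) => exists_occursAt (ℓ := ℓ) (p := p) hx
  have hcount : ∀ x i, OccursAt ℓ p u x i → ¬ Alive ℓ p u T' x → ∀ t ≤ ℓ x,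
      L (i + t) = L i + Nat.count (fun j => T (i + j)) t := by
    intro x i hi hx t
    induction t with
    | zero => simp
    | succ t ih =>
      intro ht
      rw [← Nat.add_assoc, hL _ fun hT' => hx ⟨i, hi, t, ht, hT'⟩, ih (by omega), Nat.count_succ,
        Nat.add_assoc]
  refine ZiminEncountered.of_filter (ℓ := ℓ) (L := L) (p := p) (s := fun x => L (st x))
    (e := fun x => L (st x + ℓ x)) (fun x hx => hx.mono hT) (fun x i hi hx => ?_)
    (fun x i hi hx => (hLx x i _ hx hi (hst x hi.mem)).1)
    (fun x i hi hx => (hLx x i _ hx hi (hst x hi.mem)).2) (fun x hxu hx hx' => ?_) h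
  · rw [hcount x i hi (fun h => hx (h.mono hT)) _ le_rfl, Nat.count_iff_forall_not.2]
    · rfl
    · exact fun t ht h => hx ⟨i, hi, t, ht, h⟩
  · have hx₀ := hx
    obtain ⟨i, hi, t, ht, h⟩ := hx₀
    have hcmp := hLx x i _ hx hi (hst x hxu)
    rw [← hcmp.1, ← hcmp.2, hcount x i hi hx' _ le_rfl]
    have : Nat.count (fun j => T (i + j)) (ℓ x) ≠ 0 :=
      fun h0 => Nat.count_iff_forall_not.1 h0 t ht h
    omega

/-- The triangle wave `0, 1, …, n, n + 1, n, …, 1, 0, 1, …` of period `2 * n + 2`. -/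
def zigzag (n i : ℕ) : ℕ := min (i % (2 * n + 2)) (2 * n + 2 - i % (2 * n + 2))

theorem zigzag_le (n i : ℕ) : zigzag n i ≤ n + 1 := by
  unfold zigzag
  omega

theorem succ_mod_eq (i : ℕ) {k : ℕ} (hk : 1 < k) :
    (i + 1) % k = if i % k + 1 = k then 0 else i % k + 1 := by
  have := Nat.mod_lt i (Nat.zero_lt_of_lt hk)
  rw [Nat.add_mod_eq_ite, Nat.mod_eq_of_lt hk]
  split_ifs <;> omega

theorem modEq_of_zigzag_eq {n i j : ℕ} (h : zigzag n i = zigzag n j)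
    (h' : zigzag n (i + 1) = zigzag n (j + 1)) : i ≡ j [MOD 2 * n + 2] := by
  have hi := Nat.mod_lt i (show 0 < 2 * n + 2 by omega)
  have hj := Nat.mod_lt j (show 0 < 2 * n + 2 by omega)
  unfold zigzag at h h'
  rw [succ_mod_eq i (by omega), succ_mod_eq j (by omega)] at h'
  unfold Nat.ModEq
  split_ifs at h' <;> omega

theorem modEq_of_zigzag_eq_of_extremal {n i j : ℕ} (h : zigzag n i = zigzag n j)
    (h' : ¬ (1 ≤ zigzag n i ∧ zigzag n i ≤ n)) : i ≡ j [MOD 2 * n + 2] := by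
  have hi := Nat.mod_lt i (show 0 < 2 * n + 2 by omega)
  have hj := Nat.mod_lt j (show 0 < 2 * n + 2 by omega)
  unfold zigzag at h h'
  unfold Nat.ModEq
  omega

/-- The number of positions before `i` whose symbol avoids `S` has a parity that is determined by
the symbol at `i`. -/
theorem count_zigzag_notMem_mod_two {n : ℕ} {S : Finset ℕ} (hS : S ⊆ Finset.Icc 1 n) {i : ℕ}
    (hi : zigzag n i ∉ S) :
    Nat.count (fun j => zigzag n j ∉ S) i % 2 = Nat.count (· ∉ S) (zigzag n i) % 2 := by
  have h₀ : 0 ∉ S := fun h => by simpa using hS h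
  have h₁ : n + 1 ∉ S := fun h => by simpa using hS h
  have key : ∀ i, Nat.count (fun j => zigzag n j ∉ S) i % 2 =
      (if i % (2 * n + 2) ≤ n + 1 then Nat.count (· ∉ S) (i % (2 * n + 2)) else
        Nat.count (· ∉ S) (2 * n + 2 - i % (2 * n + 2) + 1) + 1) % 2 := by
    intro i
    induction i with
    | zero => simp
    | succ i ih =>
      have hφ := Nat.mod_lt i (show 0 < 2 * n + 2 by omega)
      rw [Nat.count_succ, Nat.add_mod, ih, succ_mod_eq i (by omega)]
      unfold zigzag
      clear ih
      generalize i % (2 * n + 2) = φ at hφ ⊢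
      by_cases hn : φ + 1 = 2 * n + 2
      · rw [if_pos hn, if_pos (Nat.zero_le _), min_eq_right (by omega),
          show 2 * n + 2 - φ = 1 by omega]
        obtain rfl | hn0 := Nat.eq_zero_or_pos n
        · have : φ = 1 := by omega
          simp_all [Nat.count_succ]
        · rw [if_neg (by omega)]
          simp only [Nat.count_succ, Nat.count_zero, h₀]
          split_ifs <;> simp_all
      · rw [if_neg hn]
        rcases lt_trichotomy φ (n + 1) with h | rfl | h
        · rw [if_pos h.le, if_pos (show φ + 1 ≤ n + 1 by omega), min_eq_left (by omega),
            Nat.count_succ]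
          omega
        · rw [if_pos le_rfl, min_eq_left (by omega), if_pos h₁, if_neg (by omega),
            show 2 * n + 2 - (n + 1 + 1) + 1 = n + 1 by omega]
          omega
        · rw [if_neg h.not_ge, min_eq_right (by omega), if_neg (show ¬ φ + 1 ≤ n + 1 by omega),
            show 2 * n + 2 - (φ + 1) + 1 = 2 * n + 2 - φ by omega, Nat.count_succ]
          split_ifs <;> omega
  rw [key]
  have hφ := Nat.mod_lt i (show 0 < 2 * n + 2 by omega)
  unfold zigzag at hi ⊢
  generalize i % (2 * n + 2) = φ at hφ hi ⊢
  split_ifs with h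
  · rw [min_eq_left (by omega)]
  · rw [min_eq_right (by omega)] at hi ⊢
    rw [Nat.count_succ, if_pos hi]
    omega

theorem le_count_zigzag_notMem_add (n : ℕ) (S : Finset ℕ) :
    2 * n + 2 ≤ Nat.count (fun j => zigzag n j ∉ S) (2 * n + 2) + 2 * S.card := by
  rw [Nat.count_eq_card_filter_range]
  have hsub : Finset.range (2 * n + 2) ⊆
      ((Finset.range (2 * n + 2)).filter fun j => zigzag n j ∉ S) ∪
        (S ∪ S.image fun c => 2 * n + 2 - c) := by
    intro j hj
    have hj' := Finset.mem_range.1 hj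
    simp only [Finset.mem_union, Finset.mem_filter, Finset.mem_image, hj, true_and]
    by_cases h : zigzag n j ∈ S
    · right
      have hz : zigzag n j = min j (2 * n + 2 - j) := by rw [zigzag, Nat.mod_eq_of_lt hj']
      rcases min_choice j (2 * n + 2 - j) with h' | h' <;> rw [hz, h'] at h
      · exact Or.inl h
      · exact Or.inr ⟨_, h, by omega⟩
    · exact Or.inl h
  have h₁ := (Finset.card_le_card hsub).trans (Finset.card_union_le _ _)
  have h₂ := Finset.card_union_le S (S.image fun c => 2 * n + 2 - c)
  have h₃ : (S.image fun c => 2 * n + 2 - c).card ≤ S.card := Finset.card_image_le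
  rw [Finset.card_range] at h₁
  omega

open Classical in
/-- The letters covering only positions with symbols in `S` can be deleted. -/
theorem ZiminEncountered.of_alive_zigzag {n : ℕ} {ℓ : ℕ → ℕ} {p : ℕ} {u : List ℕ}
    (hℓ : ∀ x ∈ u, 0 < ℓ x)
    (hsym : ∀ x i j, OccursAt ℓ p u x i → OccursAt ℓ p u x j → ∀ t < ℓ x,
      zigzag n (i + t) = zigzag n (j + t)) (S : Finset ℕ) (hS : S ⊆ Finset.Icc 1 n)
    (h : ZiminEncountered (u.filter (Alive ℓ p u fun i => zigzag n i ∉ S))) :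
    ZiminEncountered u := by
  induction S using Finset.induction_on with
  | empty =>
    rwa [List.filter_eq_self.2] at h
    intro x hx
    obtain ⟨i, hi⟩ := exists_occursAt (ℓ := ℓ) (p := p) hx
    exact decide_eq_true ⟨i, hi, 0, hℓ x hx, by simp⟩
  | insert c S hc ih =>
    have hS' : S ⊆ Finset.Icc 1 n := (Finset.subset_insert c S).trans hS
    refine ih hS' (ZiminEncountered.of_alive (fun i hi hiS => hi (Finset.mem_insert_of_mem hiS))
      (fun i => (Nat.count (fun j => zigzag n j ∉ S) i + Nat.count (· ∉ S) c) % 2) ?_ ?_ h)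
    · intro i hi
      rw [not_not, Finset.mem_insert] at hi
      by_cases hiS : zigzag n i ∈ S
      · simp [Nat.count_succ, hiS]
      · have hic : zigzag n i = c := hi.resolve_right hiS
        have := count_zigzag_notMem_mod_two hS' hiS
        rw [hic] at this
        simp only [Nat.count_succ, hiS, not_false_eq_true, if_true]
        omega
    · intro x i j hx hi hj
      have hcount : ∀ t ≤ ℓ x, Nat.count (fun k => zigzag n (i + k) ∉ S) t =
          Nat.count (fun k => zigzag n (j + k) ∉ S) t := by
        intro t ht
        simp only [Nat.count_eq_card_filter_range]
        congr 1
        refine Finset.filter_congr fun k hk => ?_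
        rw [hsym x i j hi hj k ((Finset.mem_range.1 hk).trans_le ht)]
      have hex : ∃ t, t < ℓ x ∧ zigzag n (i + t) ∉ S := by
        obtain ⟨k, hk, t, ht, h⟩ := hx
        exact ⟨t, ht, hsym x k i hk hi t ht ▸ h⟩
      obtain ⟨t, ht, hti⟩ := hex
      have htj : zigzag n (j + t) ∉ S := hsym x i j hi hj t ht ▸ hti
      have h₁ := count_zigzag_notMem_mod_two hS' hti
      have h₂ := count_zigzag_notMem_mod_two hS' htj
      rw [← hsym x i j hi hj t ht, ← h₁] at h₂
      have h₃ := hcount t ht.le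
      have h₄ := hcount _ le_rfl
      simp only [Nat.count_add] at h₂ ⊢
      omega

open Classical in
/-- If the occurrences of each alive letter are congruent modulo the period of `T`, and `T` is
dense enough, then all alive letters shorter than `K` can be deleted. -/
theorem exists_alive_of_periodic {ℓ : ℕ → ℕ} {p : ℕ} {u : List ℕ} {T : ℕ → Prop} {Q K : ℕ}
    (hK : 0 < K) (hT : ∀ i j, i ≡ j [MOD Q] → (T i ↔ T j))
    (hmod : ∀ x i j, Alive ℓ p u T x → OccursAt ℓ p u x i → OccursAt ℓ p u x j → i ≡ j [MOD Q])
    (hcard : K * ((u.toFinset.filter (Alive ℓ p u T)).card + 1) ≤ Nat.count T Q) :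
    ∃ T' : ℕ → Prop, (∀ i, T' i → T i) ∧ (∀ i j, i ≡ j [MOD Q] → (T' i ↔ T' j)) ∧
      (∀ x, Alive ℓ p u T' x → K ≤ ℓ x) ∧
      K * ((u.toFinset.filter (Alive ℓ p u T')).card + 1) ≤ Nat.count T' Q ∧
      (ZiminEncountered (u.filter (Alive ℓ p u T')) →
        ZiminEncountered (u.filter (Alive ℓ p u T))) := by
  choose! st hst using fun x (hx : x ∈ u) => exists_occursAt (ℓ := ℓ) (p := p) hx
  obtain ⟨D, hD⟩ : ∃ D, D = u.toFinset.filter fun x => Alive ℓ p u T x ∧ ℓ x < K := ⟨_, rfl⟩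
  obtain ⟨T', hT'⟩ : ∃ T' : ℕ → Prop,
      T' = fun i => T i ∧ ∀ x ∈ D, ∀ t < ℓ x, ¬ i ≡ st x + t [MOD Q] := ⟨_, rfl⟩
  have hsub : ∀ i, T' i → T i := by
    rw [hT']
    exact fun i hi => hi.1
  have hper : ∀ i j, i ≡ j [MOD Q] → (T' i ↔ T' j) := by
    rw [hT']
    intro i j hij
    refine and_congr (hT i j hij) (forall₂_congr fun x _ => forall₂_congr fun t _ => ?_)
    exact not_congr ⟨hij.symm.trans, hij.trans⟩
  have hdead : ∀ x ∈ D, ¬ Alive ℓ p u T' x := by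
    rintro x hx ⟨i, hi, t, ht, h⟩
    rw [hT'] at h
    refine h.2 x hx t ht (Nat.ModEq.add_right t ?_)
    have hx' := hx
    rw [hD, Finset.mem_filter] at hx'
    exact hmod x i _ hx'.2.1 hi (hst x hi.mem)
  have hlong : ∀ x, Alive ℓ p u T' x → K ≤ ℓ x := by
    intro x hx
    by_contra hlt
    obtain ⟨i, hi, -⟩ := id hx
    refine hdead x ?_ hx
    rw [hD, Finset.mem_filter]
    exact ⟨List.mem_toFinset.2 hi.mem, hx.mono hsub, not_le.1 hlt⟩
  have hDsub : D ⊆ u.toFinset.filter (Alive ℓ p u T) := by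
    rw [hD]
    exact fun x hx => Finset.mem_filter.2
      ⟨(Finset.mem_filter.1 hx).1, (Finset.mem_filter.1 hx).2.1⟩
  have halive : (u.toFinset.filter (Alive ℓ p u T')).card + D.card ≤
      (u.toFinset.filter (Alive ℓ p u T)).card := by
    rw [← Finset.card_union_of_disjoint]
    · refine Finset.card_le_card (Finset.union_subset (fun x hx => ?_) hDsub)
      rw [Finset.mem_filter] at hx ⊢
      exact ⟨hx.1, hx.2.mono hsub⟩
    · exact Finset.disjoint_left.2 fun x hx hxD => hdead x hxD (Finset.mem_filter.1 hx).2
  have hcount : Nat.count T Q ≤ Nat.count T' Q + D.card * (K - 1) := by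
    rw [Nat.count_eq_card_filter_range, Nat.count_eq_card_filter_range]
    have hcover : (Finset.range Q).filter T ⊆ (Finset.range Q).filter T' ∪
        D.biUnion fun x => (Finset.range (ℓ x)).image fun t => (st x + t) % Q := by
      intro i hi
      obtain ⟨hiQ, hiT⟩ := Finset.mem_filter.1 hi
      by_cases h : T' i
      · exact Finset.mem_union_left _ (Finset.mem_filter.2 ⟨hiQ, h⟩)
      · refine Finset.mem_union_right _ ?_
        rw [hT'] at h
        push Not at h
        obtain ⟨x, hx, t, ht, hxt⟩ := h hiT
        refine Finset.mem_biUnion.2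
          ⟨x, hx, Finset.mem_image.2 ⟨t, Finset.mem_range.2 ht, ?_⟩⟩
        rw [← hxt, Nat.mod_eq_of_lt (Finset.mem_range.1 hiQ)]
    refine ((Finset.card_le_card hcover).trans (Finset.card_union_le _ _)).trans ?_
    refine Nat.add_le_add_left (Finset.card_biUnion_le_card_mul _ _ _ fun x hx => ?_) _
    refine Finset.card_image_le.trans ?_
    rw [hD, Finset.mem_filter] at hx
    rw [Finset.card_range]
    omega
  have hcard' : K * ((u.toFinset.filter (Alive ℓ p u T')).card + 1) ≤ Nat.count T' Q := by
    have h₁ : K * ((u.toFinset.filter (Alive ℓ p u T')).card + D.card + 1) ≤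
        K * ((u.toFinset.filter (Alive ℓ p u T)).card + 1) :=
      Nat.mul_le_mul_left _ (by omega)
    have h₂ : D.card * (K - 1) ≤ K * D.card := by
      rw [Nat.mul_comm]
      exact Nat.mul_le_mul_right _ (Nat.sub_le _ _)
    rw [show ∀ a b : ℕ, K * (a + b + 1) = K * (a + 1) + K * b by intros; ring] at h₁
    omega
  refine ⟨T', hsub, hper, hlong, hcard', ?_⟩
  obtain ⟨c, hc, hcT⟩ : ∃ c < Q, T' c := by
    by_contra! h
    rw [Nat.count_iff_forall_not.2 fun {c} hc => h c hc] at hcard'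
    exact absurd hcard' (Nat.not_le.2 (Nat.mul_pos hK (Nat.succ_pos _)))
  refine ZiminEncountered.of_alive hsub
    (fun i => Nat.count (fun j => T (c + 1 + j)) ((i + (Q - 1 - c)) % Q)) (fun i hi => ?_)
    fun x i j hx hxi hxj => ?_
  · have hr : (i + (Q - 1 - c)) % Q < Q := Nat.mod_lt _ (by omega)
    have hic : c + 1 + (i + (Q - 1 - c)) % Q ≡ i [MOD Q] := by
      calc c + 1 + (i + (Q - 1 - c)) % Q ≡ c + 1 + (i + (Q - 1 - c)) [MOD Q] :=
            (Nat.mod_modEq _ _).add_left _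
        _ = i + Q := by omega
        _ ≡ i [MOD Q] := by simp [Nat.ModEq]
    have hne : (i + (Q - 1 - c)) % Q + 1 ≠ Q := by
      intro h
      rw [Nat.add_right_comm, Nat.add_assoc, h] at hic
      refine hi ((hper c i ?_).1 hcT)
      exact Nat.ModEq.trans (by simp [Nat.ModEq]) hic
    have hsucc : (i + 1 + (Q - 1 - c)) % Q = (i + (Q - 1 - c)) % Q + 1 := by
      rw [Nat.add_right_comm, succ_mod_eq _ (by omega), if_neg hne]
    rw [hsucc, Nat.count_succ]
    simp only [hT _ _ hic]
  · have h := hmod x i j hx hxi hxj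
    have h₁ : (i + (Q - 1 - c)) % Q = (j + (Q - 1 - c)) % Q := h.add_right _
    have h₂ : (i + ℓ x + (Q - 1 - c)) % Q = (j + ℓ x + (Q - 1 - c)) % Q :=
      (h.add_right _).add_right _
    simp only [h₁, h₂, and_self]

/-- The parity of the number of the period containing `i`, on the scale given by the 2-adic
valuation of `i`. -/
def scaleBit (n i : ℕ) : ℕ := i / (2 * n + 2) / 2 ^ padicValNat 2 i % 2

theorem scaleBit_eq {n s i : ℕ} (hi : i % 2 ^ (s + 1) = 2 ^ s) :
    scaleBit n i = i / ((2 * n + 2) * 2 ^ s) % 2 := by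
  have hval : padicValNat 2 i = s := by
    have h := Nat.div_add_mod i (2 ^ (s + 1))
    rw [hi] at h
    have h' : 2 ^ s * (2 * (i / 2 ^ (s + 1)) + 1) = i := by
      conv_rhs => rw [← h]
      ring
    rw [← h', padicValNat.mul (by positivity) (by omega), padicValNat.prime_pow,
      padicValNat.eq_zero_of_not_dvd (by omega), Nat.add_zero]
  rw [scaleBit, hval, Nat.div_div_eq_div_mul]

theorem modEq_double_of_scaleBit_eq {n s l i j : ℕ} (hl : 2 ^ (s + 1) ≤ l)
    (hij : i ≡ j [MOD (2 * n + 2) * 2 ^ s])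
    (hbit : ∀ t < l, scaleBit n (i + t) = scaleBit n (j + t)) :
    i ≡ j [MOD (2 * n + 2) * 2 ^ (s + 1)] := by
  have hpos : 0 < 2 ^ (s + 1) := by positivity
  have hij' : i ≡ j [MOD 2 ^ (s + 1)] :=
    hij.of_dvd ⟨n + 1, by ring⟩
  obtain ⟨t, ht, hti⟩ : ∃ t < 2 ^ (s + 1), (i + t) % 2 ^ (s + 1) = 2 ^ s := by
    refine ⟨(2 ^ s + (2 ^ (s + 1) - i % 2 ^ (s + 1))) % 2 ^ (s + 1), Nat.mod_lt _ hpos, ?_⟩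
    have hlt := Nat.mod_lt i hpos
    rw [Nat.add_mod_mod, ← Nat.mod_add_mod, show ∀ a b c : ℕ, a < c → a + (b + (c - a)) = b + c by
      omega, Nat.add_mod_right, Nat.mod_eq_of_lt (Nat.pow_lt_pow_right one_lt_two s.lt_succ_self)]
    exact hlt
  have htj : (j + t) % 2 ^ (s + 1) = 2 ^ s :=
    Eq.trans (hij'.add_right t).symm hti
  have hb := hbit t (ht.trans_le hl)
  rw [scaleBit_eq hti, scaleBit_eq htj] at hb
  refine Nat.ModEq.add_right_cancel' t ?_
  have hij₂ : (i + t) % ((2 * n + 2) * 2 ^ s) = (j + t) % ((2 * n + 2) * 2 ^ s) :=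
    hij.add_right t
  rw [Nat.ModEq, pow_succ, ← Nat.mul_assoc, Nat.mod_mul (a := _ * _), Nat.mod_mul (a := _ * _),
    hij₂, hb]

open Classical in
/-- For every scale `s`, all letters shorter than `2 ^ s` can be deleted. -/
theorem exists_alive_of_scale {n : ℕ} {ℓ : ℕ → ℕ} {p : ℕ} {u : List ℕ} (hn : u.toFinset.card = n)
    (hℓ : ∀ x ∈ u, 0 < ℓ x)
    (hsym : ∀ x i j, OccursAt ℓ p u x i → OccursAt ℓ p u x j → ∀ t < ℓ x,
      zigzag n (i + t) = zigzag n (j + t))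
    (hbit : ∀ x i j, OccursAt ℓ p u x i → OccursAt ℓ p u x j → ∀ t < ℓ x,
      scaleBit n (i + t) = scaleBit n (j + t)) (s : ℕ) :
    ∃ T : ℕ → Prop, (∀ i j, i ≡ j [MOD (2 * n + 2) * 2 ^ s] → (T i ↔ T j)) ∧
      (∀ x, Alive ℓ p u T x → 2 ^ s ≤ ℓ x) ∧
      (∀ x i j, Alive ℓ p u T x → OccursAt ℓ p u x i → OccursAt ℓ p u x j →
        i ≡ j [MOD (2 * n + 2) * 2 ^ s]) ∧
      2 ^ (s + 1) * ((u.toFinset.filter (Alive ℓ p u T)).card + 1) ≤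
        Nat.count T ((2 * n + 2) * 2 ^ s) ∧
      (ZiminEncountered (u.filter (Alive ℓ p u T)) → ZiminEncountered u) := by
  induction s with
  | zero =>
    choose! st hst using fun x (hx : x ∈ u) => exists_occursAt (ℓ := ℓ) (p := p) hx
    obtain ⟨D, hD⟩ : ∃ D, D = u.toFinset.filter fun x =>
      ℓ x = 1 ∧ 1 ≤ zigzag n (st x) ∧ zigzag n (st x) ≤ n := ⟨_, rfl⟩
    obtain ⟨S, hS⟩ : ∃ S, S = D.image fun x => zigzag n (st x) := ⟨_, rfl⟩
    have hSn : S ⊆ Finset.Icc 1 n := by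
      rw [hS, hD]
      intro c hc
      obtain ⟨x, hx, rfl⟩ := Finset.mem_image.1 hc
      exact Finset.mem_Icc.2 (Finset.mem_filter.1 hx).2.2
    have hst_eq : ∀ x i, OccursAt ℓ p u x i → zigzag n i = zigzag n (st x) := fun x i hi =>
      hsym x i _ hi (hst x hi.mem) 0 (hℓ x hi.mem)
    have hdead : ∀ x ∈ D, ¬ Alive ℓ p u (fun i => zigzag n i ∉ S) x := by
      rintro x hx ⟨i, hi, t, ht, h⟩
      have hx' := hx
      rw [hD, Finset.mem_filter] at hx'
      obtain rfl : t = 0 := by omega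
      rw [Nat.add_zero, hst_eq x i hi, hS] at h
      exact h (Finset.mem_image_of_mem _ hx)
    refine ⟨fun i => zigzag n i ∉ S, fun i j hij => ?_, ?_, fun x i j hx hi hj => ?_, ?_,
      ZiminEncountered.of_alive_zigzag hℓ hsym S hSn⟩
    · rw [pow_zero, Nat.mul_one, Nat.ModEq] at hij
      simp only [zigzag, hij]
    · rintro x ⟨i, hi, -⟩
      exact hℓ x hi.mem
    · rw [pow_zero, Nat.mul_one]
      have hpos := hℓ x hi.mem
      have hij : zigzag n i = zigzag n j := hsym x i j hi hj 0 hpos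
      by_cases h1 : ℓ x = 1
      · refine modEq_of_zigzag_eq_of_extremal hij fun h => hdead x ?_ hx
        rw [hD, Finset.mem_filter, ← hst_eq x i hi]
        exact ⟨List.mem_toFinset.2 hi.mem, h1, h⟩
      · exact modEq_of_zigzag_eq hij (hsym x i j hi hj 1 (by omega))
    · rw [pow_zero, Nat.mul_one]
      have h₁ := le_count_zigzag_notMem_add n S
      have h₂ : S.card ≤ D.card := hS ▸ Finset.card_image_le
      have h₃ : (u.toFinset.filter (Alive ℓ p u fun i => zigzag n i ∉ S)).card + D.card ≤ n := by
        rw [← Finset.card_union_of_disjoint, ← hn]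
        · refine Finset.card_le_card (Finset.union_subset (Finset.filter_subset _ _) ?_)
          exact hD ▸ Finset.filter_subset _ _
        · exact Finset.disjoint_left.2 fun x hx hxD => hdead x hxD (Finset.mem_filter.1 hx).2
      convert show 2 ^ (0 + 1) * ((u.toFinset.filter (Alive ℓ p u fun i => zigzag n i ∉ S)).card + 1) ≤
        Nat.count (fun j => zigzag n j ∉ S) (2 * n + 2) by omega
  | succ s ih =>
    obtain ⟨T, hper, -, hmod, hcard, hT⟩ := ih
    obtain ⟨T', hsub, hper', hlong, hcard', hT'⟩ :=
      exists_alive_of_periodic (by positivity) hper hmod hcard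
    refine ⟨T', fun i j hij => hper' i j (hij.of_dvd ⟨2, by ring⟩), hlong, fun x i j hx hi hj =>
      modEq_double_of_scaleBit_eq (hlong x hx) (hmod x i j (hx.mono hsub) hi hj)
        (hbit x i j hi hj), ?_, fun h => hT (hT' h)⟩
    have hshift : ∀ k, T' ((2 * n + 2) * 2 ^ s + k) ↔ T' k := fun k =>
      hper' _ _ (by simp [Nat.ModEq])
    have hcount : Nat.count T' ((2 * n + 2) * 2 ^ (s + 1)) =
        2 * Nat.count T' ((2 * n + 2) * 2 ^ s) := by
      rw [show (2 * n + 2) * 2 ^ (s + 1) = (2 * n + 2) * 2 ^ s + (2 * n + 2) * 2 ^ s by ring,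
        Nat.count_add]
      simp only [Nat.count_eq_card_filter_range, hshift]
      omega
    rw [hcount, pow_succ, Nat.mul_comm _ 2, Nat.mul_assoc]
    exact Nat.mul_le_mul_left 2 hcard'

theorem OccursAt.getElem?_eq {B : Type*} {u : List ℕ} {h : ℕ → List B} {a b : List B} {x i : ℕ}
    (hi : OccursAt (fun y => (h y).length) a.length u x i) {t : ℕ} (ht : t < (h x).length) :
    (a ++ u.flatMap h ++ b)[i + t]? = (h x)[t]? := by
  obtain ⟨u₁, u₂, rfl, rfl⟩ := hi
  have hassoc : a ++ (u₁ ++ x :: u₂).flatMap h ++ b =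
      (a ++ u₁.flatMap h) ++ (h x ++ (u₂.flatMap h ++ b)) := by simp
  have hlen : (a ++ u₁.flatMap h).length = a.length + (u₁.map fun y => (h y).length).sum := by
    simp [List.length_flatMap]
  rw [hassoc, List.getElem?_append_right (by omega), hlen, Nat.add_sub_cancel_left,
    List.getElem?_append_left ht]

/-- The infinite word over `2 * n + 4` letters whose letters record the triangle wave and the scale
bit. -/
def zigzagWord (n i : ℕ) : Fin (2 * n + 4) :=
  ⟨2 * zigzag n i + scaleBit n i, by
    have h₁ := zigzag_le n i
    have h₂ : scaleBit n i < 2 := Nat.mod_lt _ two_pos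
    omega⟩

theorem zigzagWord_eq_iff {n i j : ℕ} :
    zigzagWord n i = zigzagWord n j ↔ zigzag n i = zigzag n j ∧ scaleBit n i = scaleBit n j := by
  have h₁ : scaleBit n i < 2 := Nat.mod_lt _ two_pos
  have h₂ : scaleBit n j < 2 := Nat.mod_lt _ two_pos
  rw [zigzagWord, zigzagWord, Fin.mk.injEq]
  omega

theorem ZiminEncountered.of_encounters_zigzagWord {u : List ℕ} {N : ℕ}
    (h : Encounters u ((List.range N).map (zigzagWord u.toFinset.card))) : ZiminEncountered u := by
  classical
  obtain ⟨h, hne, a, b, hab⟩ := h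
  have hget : ∀ x i, OccursAt (fun y => (h y).length) a.length u x i → ∀ t < (h x).length,
      (h x)[t]? = some (zigzagWord u.toFinset.card (i + t)) ∧ i + t < N := by
    intro x i hi t ht
    have hw := hi.getElem?_eq (b := b) ht
    rw [hab, List.getElem?_map] at hw
    by_cases hN : i + t < N
    · rw [List.getElem?_range hN] at hw
      exact ⟨hw.symm, hN⟩
    · rw [List.getElem?_eq_none (by simpa using hN), List.getElem?_eq_getElem ht] at hw
      simp at hw
  have heq : ∀ x i j, OccursAt (fun y => (h y).length) a.length u x i →
      OccursAt (fun y => (h y).length) a.length u x j → ∀ t < (h x).length,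
      zigzag u.toFinset.card (i + t) = zigzag u.toFinset.card (j + t) ∧
        scaleBit u.toFinset.card (i + t) = scaleBit u.toFinset.card (j + t) := fun x i j hi hj t ht =>
    zigzagWord_eq_iff.1 (Option.some.inj ((hget x i hi t ht).1.symm.trans (hget x j hj t ht).1))
  obtain ⟨T, -, hlong, -, -, hT⟩ := exists_alive_of_scale (p := a.length) rfl
    (fun x hx => List.length_pos_iff.2 (hne x hx)) (fun x i j hi hj t ht => (heq x i j hi hj t ht).1)
    (fun x i j hi hj t ht => (heq x i j hi hj t ht).2) N
  refine hT ?_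
  rw [List.filter_eq_nil_iff.2]
  · exact ⟨0, fun _ => [], by simp, by simp⟩
  · intro x _ hx
    have hx' := of_decide_eq_true hx
    have hlen := hlong x hx'
    obtain ⟨i, hi, t, ht, -⟩ := hx'
    have hN := (hget x i hi ((h x).length - 1) (Nat.sub_lt (Nat.zero_lt_of_lt ht) one_pos)).2
    have := N.lt_two_pow_self
    omega

/-- The number of distinct letters of `u` is `u.toFinset.card = α(u)`.
Every non-blocking pattern `u` is `(2·α(u)+4)`-avoidable; in particular
`m(u)`, the least `n` such that `u` is `n`-avoidable, satisfies
`m(u) ≤ 2·α(u)+4`. -/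
theorem avoidable_on_two_alpha_add_four (u : List ℕ) (hu : u ≠ []) (hnb : ¬ Blocking u) :
    NAvoidable u (2 * u.toFinset.card + 4) ∧
    sInf {n : ℕ | NAvoidable u n} ≤ 2 * u.toFinset.card + 4 := by
  have havoid : NAvoidable u (2 * u.toFinset.card + 4) := by
    refine Set.infinite_of_injective_forall_mem
      (f := fun N => (List.range N).map (zigzagWord u.toFinset.card)) (fun M N h => ?_)
      fun N h => hnb (ZiminEncountered.of_encounters_zigzagWord h).blocking
    simpa using congrArg List.length h
  exact ⟨havoid, Nat.sInf_le havoid⟩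
end

section
/- (Lemma 1(c)) Let k be a positive integer divisible by 4. For any i, j ∈ {1,...,k}, any nonempty suffix b₂ of a_i and any nonempty prefix c₁ of a_j, the adjacency word b₂c₁ is not a factor of a_m for any m ∈ {1,...,k}. -/
/-- The cycle `(1,3,5,...,k-1)` on `{1,...,k}` (as a function on `ℕ`,
fixing everything else in `{1,...,k}`). -/
def f1 (k : ℕ) : ℕ → ℕ := fun j => if j % 2 = 1 then (if j + 2 ≤ k then j + 2 else 1) else j

/-- The cycle `(2,6,10,...,k-2)` on `{1,...,k}`. -/
def g1 (k : ℕ) : ℕ → ℕ := fun j => if j % 4 = 2 then (if j + 4 ≤ k then j + 4 else 2) else j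

/-- The `k` permutations `v_1,...,v_k` of `{1,...,k}`:
`v_j = f_j = f1^j` for `1 ≤ j ≤ k/2` and `v_{k/2+j} = g_j = g1 ∘ f1^(j-1)` for `1 ≤ j ≤ k/2`. -/
def v (k i : ℕ) : ℕ → ℕ :=
  if i ≤ k / 2 then (f1 k)^[i] else g1 k ∘ (f1 k)^[i - k / 2 - 1]

/-- The word `a_i = x_{v_i(1)} x_{v_i(2)} ... x_{v_i(k)}` over the alphabet
`X = {x_1,...,x_k}`, where the letter `x_p` is encoded by its index `p : ℕ`. -/
def aw (k i : ℕ) : List ℕ := (List.range k).map (fun p => v k i (p + 1))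

/-- The words `J_1 = a_1`, `J_{m+1} = φ₀(J_m)` where `φ₀(x_i) = a_i` letterwise;
`Jw k m` is `J_{m+1}`, so `Jw k` enumerates `J_1, J_2, ...`. -/
def Jw (k : ℕ) : ℕ → List ℕ
  | 0 => aw k 1
  | m + 1 => (Jw k m).flatMap (aw k)

theorem f1_iterate_of_even (k n : ℕ) {p : ℕ} (hp : p % 2 = 0) : (f1 k)^[n] p = p :=
  Function.iterate_fixed (by simp [f1, hp]) n

theorem f1_iterate_of_odd (k n : ℕ) {p : ℕ} (hp : p % 2 = 1) : (f1 k)^[n] p % 2 = 1 := by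
  induction n with
  | zero => exact hp
  | succ n ih =>
    rw [Function.iterate_succ_apply', f1]
    split_ifs <;> omega

theorem f1_iterate_eq_self_iff {k : ℕ} (h4 : 4 ∣ k) (n p : ℕ) : (f1 k)^[n] p = k ↔ p = k := by
  rcases Nat.mod_two_eq_zero_or_one p with hp | hp
  · rw [f1_iterate_of_even k n hp]
  · have := f1_iterate_of_odd k n hp
    omega

theorem g1_eq_self_iff {k : ℕ} (h4 : 4 ∣ k) (p : ℕ) : g1 k p = k ↔ p = k := by
  unfold g1
  split_ifs <;> omega

/-- Each `v_i` fixes `k`, and takes the value `k` nowhere else. -/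
theorem v_eq_self_iff {k : ℕ} (h4 : 4 ∣ k) (i p : ℕ) : v k i p = k ↔ p = k := by
  unfold v
  split_ifs
  · exact f1_iterate_eq_self_iff h4 i p
  · rw [Function.comp_apply, g1_eq_self_iff h4, f1_iterate_eq_self_iff h4]

theorem length_aw (k i : ℕ) : (aw k i).length = k := by
  simp [aw]

theorem getElem_aw_eq_self_iff {k : ℕ} (h4 : 4 ∣ k) (i n : ℕ) (hn : n < (aw k i).length) :
    (aw k i)[n] = k ↔ n + 1 = k := by
  simp [aw, v_eq_self_iff h4]

theorem getLast_aw {k : ℕ} (h4 : 4 ∣ k) (i : ℕ) (h : aw k i ≠ []) : (aw k i).getLast h = k := by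
  have := List.length_pos_of_ne_nil h
  rw [List.getLast_eq_getElem, getElem_aw_eq_self_iff h4]
  have := length_aw k i
  omega

/-- (Lemma 1(c)) For `i, j, m ∈ {1,...,k}`, no adjacent word — the
concatenation `b₂ ++ c₁` of a nonempty suffix `b₂` of `a_i` with a nonempty
prefix `c₁` of `a_j` — is a factor of `a_m`. -/
theorem adjacent_not_factor (k : ℕ) (hk : 0 < k) (h4 : 4 ∣ k)
    (i j m : ℕ) (hi : i ∈ Finset.Icc 1 k) (hj : j ∈ Finset.Icc 1 k)
    (hm : m ∈ Finset.Icc 1 k)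
    (b₂ c₁ : List ℕ) (hb : b₂ <:+ aw k i) (hc : c₁ <+: aw k j)
    (hb0 : b₂ ≠ []) (hc0 : c₁ ≠ []) :
    ¬ (b₂ ++ c₁) <:+: aw k m := by
  rintro ⟨s, t, hst⟩
  have hk_last : b₂.getLast hb0 = k := by
    rw [hb.getLast hb0, getLast_aw h4]
  rw [← List.dropLast_append_getLast hb0, hk_last] at hst
  have hlen := congrArg List.length hst
  rw [length_aw] at hlen
  simp only [List.length_append, List.length_singleton] at hlen
  have hn : s.length + b₂.dropLast.length < (aw k m).length := by
    rw [length_aw]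
    omega
  have hget : (aw k m)[s.length + b₂.dropLast.length] = k := by
    simp only [← hst, List.append_assoc]
    rw [List.getElem_append_right (by omega), List.getElem_append_right (by omega)]
    simp
  have hpos := (getElem_aw_eq_self_iff h4 m _ hn).mp hget
  have := List.length_pos_of_ne_nil hc0
  omega
end
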